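/- Let ν > −1 and let (j_{ν,k})_{k≥1} be the strictly increasing enumeration of the positive zeros of the Bessel function J_ν. Then the configuration of squared zeros (j_{ν,k}²)_{k≥1} satisfies conditions (C.A): (i) for every α ∈ (1/2, 1), Σ_{k≥1} j_{ν,k}^{−2α} < ∞; and (ii) there exist β > 0 and C₂ > 0 such that for every i ≥ 1, Σ_{k ≠ i} |j_{ν,k}² − j_{ν,i}²|^{−1} ≤ C₂ (max(j_{ν,i}², 1))^{−β}. -/

import Mathlib

open Real

/-- The Bessel function of the first kind `J_ν(z)`. -/
noncomputable def besselJ (ν z : ℝ) : ℝ :=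
  ∑' n : ℕ, ((-1 : ℝ) ^ n / (Real.Gamma ((n : ℝ) + 1) * Real.Gamma ((n : ℝ) + 1 + ν))) *
    (z / 2) ^ (2 * (n : ℝ) + ν)

/-!
The function `w(z) = (z / 2) ^ (-ν) J_ν(z)` is entire and solves `w'' = -((2ν + 1) / z) w' - w`,
so on `[a, ∞)` with `a > 0` it satisfies `|w''| ≤ K |w'| + |w|`. If `w` vanishes at both ends of a
short interval, Rolle's theorem gives a zero of `w'` inside it; integrating the inequality twice
then bounds `max |w'|` by a small multiple of itself, which forces `w = 0`. Hence the positive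
zeros of `J_ν` have gaps at least some `δ > 0`, and both conditions hold for any such sequence:
`j k ≥ δ k` gives (i), and (ii) follows from `|x² - y²| = |x - y| (x + y)`, in which the factor
`x + y` dominates both `|x - y|` and `y`.
-/

open Filter Set Topology
open FormalMultilinearSeries (ofScalars ofScalarsSum ofScalars_sum_eq ofScalars_series_eq_zero
  ofScalars_radius_eq_top_of_tendsto)
open scoped Nat

section OfScalars

variable {𝕜 : Type*} [NontriviallyNormedField 𝕜] [CompleteSpace 𝕜] {c : ℕ → 𝕜}

lemma hasFPowerSeriesOnBall_ofScalarsSum (hc : (ofScalars 𝕜 c).radius = ⊤) :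
    HasFPowerSeriesOnBall (ofScalarsSum c : 𝕜 → 𝕜) (ofScalars 𝕜 c) 0 ⊤ :=
  hc ▸ (ofScalars 𝕜 c).hasFPowerSeriesOnBall (hc ▸ ENNReal.zero_lt_top)

lemma hasSum_ofScalarsSum (hc : (ofScalars 𝕜 c).radius = ⊤) (t : 𝕜) :
    HasSum (fun n ↦ c n * t ^ n) (ofScalarsSum c t) := by
  simpa [mul_comm] using (hasFPowerSeriesOnBall_ofScalarsSum hc).hasSum (y := t) (by simp)

lemma hasDerivAt_ofScalarsSum (hc : (ofScalars 𝕜 c).radius = ⊤) (t : 𝕜) :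
    HasDerivAt (ofScalarsSum c) (ofScalarsSum (fun n ↦ (n + 1) * c (n + 1)) t) t := by
  have hseries := hasFPowerSeriesOnBall_ofScalarsSum hc
  have hderiv := ((ContinuousLinearMap.apply 𝕜 𝕜 (1 : 𝕜)).comp_hasFPowerSeriesOnBall
    hseries.fderiv).hasSum (y := t) (by simp)
  have hdiff : DifferentiableAt 𝕜 (ofScalarsSum c : 𝕜 → 𝕜) t :=
    hseries.differentiableOn.differentiableAt (by simp)
  refine hdiff.hasDerivAt.congr_deriv ?_
  rw [ofScalars_sum_eq, ← fderiv_apply_one_eq_deriv]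
  simpa [mul_comm] using hderiv.tsum_eq.symm

lemma exists_mem_Ioo_ofScalarsSum_ne_zero {c : ℕ → ℝ} (hc : (ofScalars ℝ c).radius = ⊤)
    (hc0 : c ≠ 0) {p q : ℝ} (hpq : p < q) : ∃ t ∈ Ioo p q, ofScalarsSum c t ≠ 0 := by
  by_contra! hzero
  have hseries := hasFPowerSeriesOnBall_ofScalarsSum hc
  obtain ⟨s, hs⟩ := nonempty_Ioo.2 hpq
  have heq : ofScalarsSum c = fun _ : ℝ ↦ (0 : ℝ) :=
    AnalyticOnNhd.eq_of_eventuallyEq (z₀ := s) (fun t _ ↦ hseries.analyticAt_of_mem (by simp))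
      (fun _ _ ↦ analyticAt_const) (eventually_of_mem (Ioo_mem_nhds hs.1 hs.2) hzero)
  have hseries0 := hseries.hasFPowerSeriesAt
  rw [heq] at hseries0
  exact hc0 (ofScalars_series_eq_zero (E := ℝ) |>.1 hseries0.eq_zero)

end OfScalars

lemma inv_Gamma_eq_self_mul_inv_Gamma_add_one (s : ℝ) : (Gamma s)⁻¹ = s * (Gamma (s + 1))⁻¹ := by
  rcases eq_or_ne s 0 with rfl | hs
  · simp
  · rw [Gamma_add_one hs, mul_inv, mul_inv_cancel_left₀ hs]

/-- The Taylor coefficients `1 / (n! Γ(n + 1 + μ))` of the Bessel–Clifford function. At the poles of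
`Γ` the convention `Gamma = 0` makes the coefficient vanish, in agreement with `1 / Γ` being
entire. -/
noncomputable def besselCliffordCoeff (μ : ℝ) (n : ℕ) : ℝ := (n ! * Gamma (n + 1 + μ))⁻¹

lemma besselCliffordCoeff_eq_mul_add_one (μ : ℝ) (n : ℕ) :
    besselCliffordCoeff μ n = (n + 1 + μ) * besselCliffordCoeff (μ + 1) n := by
  rw [besselCliffordCoeff, besselCliffordCoeff, mul_inv, mul_inv,
    inv_Gamma_eq_self_mul_inv_Gamma_add_one, ← add_assoc]
  ring

lemma succ_mul_besselCliffordCoeff_succ (μ : ℝ) (n : ℕ) :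
    (n + 1) * besselCliffordCoeff μ (n + 1) = besselCliffordCoeff (μ + 1) n := by
  rw [besselCliffordCoeff, besselCliffordCoeff, Nat.factorial_succ, mul_inv, mul_inv]
  push_cast
  rw [show (n : ℝ) + 1 + 1 + μ = n + 1 + (μ + 1) by ring]
  field_simp

lemma besselCliffordCoeff_eq_mul_succ (μ : ℝ) (n : ℕ) :
    besselCliffordCoeff μ n = (n + 1) * (n + 1 + μ) * besselCliffordCoeff μ (n + 1) := by
  rw [besselCliffordCoeff_eq_mul_add_one, ← succ_mul_besselCliffordCoeff_succ]
  ring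

lemma eventually_besselCliffordCoeff_ne_zero (μ : ℝ) :
    ∀ᶠ n in atTop, besselCliffordCoeff μ n ≠ 0 := by
  filter_upwards [tendsto_natCast_atTop_atTop.eventually_gt_atTop (-1 - μ)] with n hn
  exact inv_ne_zero (mul_ne_zero (by positivity) (Gamma_pos_of_pos (by linarith)).ne')

lemma tendsto_norm_besselCliffordCoeff_succ_div (μ : ℝ) :
    Tendsto (fun n ↦ ‖besselCliffordCoeff μ n.succ‖ / ‖besselCliffordCoeff μ n‖) atTop (𝓝 0) := by
  have hprod : Tendsto (fun n : ℕ ↦ ((n : ℝ) + 1) * (n + 1 + μ)) atTop atTop :=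
    (tendsto_atTop_add_const_right _ _ tendsto_natCast_atTop_atTop).atTop_mul_atTop₀
      (tendsto_atTop_add_const_right _ _
        (tendsto_atTop_add_const_right _ _ tendsto_natCast_atTop_atTop))
  refine (tendsto_inv_atTop_zero.comp hprod).norm.congr' ?_ |>.trans_eq ?_
  · filter_upwards [eventually_besselCliffordCoeff_ne_zero μ] with n hn
    rw [besselCliffordCoeff_eq_mul_succ μ n] at hn ⊢
    rw [← norm_div, div_mul_cancel_right₀ (right_ne_zero_of_mul hn), Function.comp_apply]
  · simp

lemma radius_ofScalars_besselCliffordCoeff (μ : ℝ) :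
    (ofScalars ℝ (besselCliffordCoeff μ)).radius = ⊤ :=
  ofScalars_radius_eq_top_of_tendsto ℝ _ (eventually_besselCliffordCoeff_ne_zero μ)
    (tendsto_norm_besselCliffordCoeff_succ_div μ)

/-- The Bessel–Clifford function `C_μ(t) = ∑ tⁿ / (n! Γ(n + 1 + μ))`, the entire function underlying
`J_μ`: differentiation shifts the parameter by one. -/
noncomputable def besselClifford (μ t : ℝ) : ℝ := ofScalarsSum (besselCliffordCoeff μ) t

lemma hasSum_besselClifford (μ t : ℝ) :
    HasSum (fun n ↦ besselCliffordCoeff μ n * t ^ n) (besselClifford μ t) :=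
  hasSum_ofScalarsSum (radius_ofScalars_besselCliffordCoeff μ) t

lemma hasDerivAt_besselClifford (μ t : ℝ) :
    HasDerivAt (besselClifford μ) (besselClifford (μ + 1) t) t := by
  refine (hasDerivAt_ofScalarsSum (radius_ofScalars_besselCliffordCoeff μ) t).congr_deriv ?_
  simp only [succ_mul_besselCliffordCoeff_succ, besselClifford]

lemma besselClifford_eq_add (μ t : ℝ) :
    besselClifford μ t = (μ + 1) * besselClifford (μ + 1) t + t * besselClifford (μ + 2) t := by
  have hshift : HasSum (fun n : ℕ ↦ n * besselCliffordCoeff (μ + 1) n * t ^ n)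
      (t * besselClifford (μ + 2) t) := by
    rw [← hasSum_nat_add_iff' 1, Finset.sum_range_one, Nat.cast_zero, zero_mul, zero_mul, sub_zero]
    convert! (hasSum_besselClifford (μ + 2) t).mul_left t using 2 with n
    rw [Nat.cast_succ, succ_mul_besselCliffordCoeff_succ, add_assoc μ, one_add_one_eq_two]
    ring
  refine (hasSum_besselClifford μ t).unique ?_
  convert! ((hasSum_besselClifford (μ + 1) t).mul_left (μ + 1)).add hshift using 2 with n
  rw [besselCliffordCoeff_eq_mul_add_one]
  ring

lemma exists_mem_Ioo_besselClifford_ne_zero (μ : ℝ) {p q : ℝ} (hpq : p < q) :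
    ∃ t ∈ Ioo p q, besselClifford μ t ≠ 0 := by
  obtain ⟨n, hn⟩ := (eventually_besselCliffordCoeff_ne_zero μ).exists
  exact exists_mem_Ioo_ofScalarsSum_ne_zero (radius_ofScalars_besselCliffordCoeff μ)
    (fun h ↦ hn (congrFun h n)) hpq

/-- The function `(z / 2) ^ (-ν) J_ν(z)`, extended to an even entire function. It has the same
positive zeros as `J_ν` and no singularity at the origin. -/
noncomputable def reducedBesselJ (ν z : ℝ) : ℝ := besselClifford ν (-(z ^ 2 / 4))

lemma besselJ_eq_rpow_mul_reducedBesselJ (ν : ℝ) {z : ℝ} (hz : 0 < z) :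
    besselJ ν z = (z / 2) ^ ν * reducedBesselJ ν z := by
  rw [besselJ, reducedBesselJ, ← (hasSum_besselClifford ν _).tsum_eq, ← tsum_mul_left]
  refine tsum_congr fun n ↦ ?_
  have hpow : (z / 2) ^ (2 * (n : ℝ) + ν) = (z / 2) ^ ν * (z ^ 2 / 4) ^ n := by
    rw [rpow_add (by positivity), mul_comm, rpow_mul (by positivity), rpow_natCast, rpow_two,
      div_pow]
    norm_num
  rw [hpow, besselCliffordCoeff, Gamma_nat_eq_factorial, neg_pow (z ^ 2 / 4), div_eq_mul_inv]
  ring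

lemma besselJ_eq_zero_iff_reducedBesselJ_eq_zero {ν z : ℝ} (hz : 0 < z) :
    besselJ ν z = 0 ↔ reducedBesselJ ν z = 0 := by
  rw [besselJ_eq_rpow_mul_reducedBesselJ ν hz, mul_eq_zero,
    or_iff_right (rpow_pos_of_pos (half_pos hz) ν).ne']

lemma hasDerivAt_reducedBesselJ (ν z : ℝ) :
    HasDerivAt (reducedBesselJ ν) (-(z / 2) * reducedBesselJ (ν + 1) z) z := by
  have harg : HasDerivAt (fun z : ℝ ↦ -(z ^ 2 / 4)) (-(z / 2)) z :=
    ((hasDerivAt_pow 2 z).div_const 4).fun_neg.congr_deriv (by ring)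
  exact ((hasDerivAt_besselClifford ν _).comp z harg).congr_deriv (mul_comm _ _)

lemma reducedBesselJ_eq_sub (ν z : ℝ) :
    reducedBesselJ ν z =
      (ν + 1) * reducedBesselJ (ν + 1) z - z ^ 2 / 4 * reducedBesselJ (ν + 2) z := by
  rw [reducedBesselJ, besselClifford_eq_add, neg_mul, ← sub_eq_add_neg]
  rfl

lemma hasDerivAt_deriv_reducedBesselJ (ν z : ℝ) :
    HasDerivAt (fun z ↦ -(z / 2) * reducedBesselJ (ν + 1) z)
      ((2 * ν + 1) / 2 * reducedBesselJ (ν + 1) z - reducedBesselJ ν z) z := by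
  refine (((hasDerivAt_id z).div_const 2).neg.mul
    (hasDerivAt_reducedBesselJ (ν + 1) z)).congr_deriv ?_
  rw [reducedBesselJ_eq_sub ν z, add_assoc ν, one_add_one_eq_two, Pi.neg_apply, id]
  ring

lemma exists_mem_Ioo_reducedBesselJ_ne_zero (ν : ℝ) {a b : ℝ} (ha : 0 ≤ a) (hab : a < b) :
    ∃ z ∈ Ioo a b, reducedBesselJ ν z ≠ 0 := by
  have hlt : -(b ^ 2 / 4) < -(a ^ 2 / 4) := by gcongr
  obtain ⟨t, ⟨hbt, hta⟩, ht⟩ := exists_mem_Ioo_besselClifford_ne_zero ν hlt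
  have hz : (2 * √(-t)) ^ 2 = 4 * -t := by
    rw [mul_pow, sq_sqrt (by nlinarith)]
    norm_num
  refine ⟨2 * √(-t), ⟨?_, ?_⟩, ?_⟩
  · exact lt_of_pow_lt_pow_left₀ 2 (by positivity) (by linarith)
  · exact lt_of_pow_lt_pow_left₀ 2 (ha.trans hab.le) (by linarith)
  · rwa [reducedBesselJ, hz, mul_div_cancel_left₀ _ four_ne_zero, neg_neg]

lemma abs_le_mul_sub_of_hasDerivAt {f f' : ℝ → ℝ} {a b c x M : ℝ}
    (hf : ∀ y ∈ Icc a b, HasDerivAt f (f' y) y) (hM : ∀ y ∈ Icc a b, |f' y| ≤ M)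
    (hc : c ∈ Icc a b) (hfc : f c = 0) (hx : x ∈ Icc a b) : |f x| ≤ M * (b - a) :=
  calc |f x| = |f x - f c| := by rw [hfc, sub_zero]
    _ ≤ M * |x - c| := (convex_Icc a b).norm_image_sub_le_of_norm_hasDerivWithin_le
        (fun y hy ↦ (hf y hy).hasDerivWithinAt) hM hc hx
    _ ≤ M * (b - a) := by
        have := (abs_nonneg _).trans (hM c hc)
        gcongr
        exact abs_sub_le_of_le_of_le hx.1 hx.2 hc.1 hc.2

lemma one_le_mul_sub_of_zeros_of_abs_deriv2_le {f f' f'' : ℝ → ℝ} {a b K L : ℝ} (hab : a < b)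
    (hK : 0 ≤ K) (hL : 0 ≤ L)
    (hf : ∀ x ∈ Icc a b, HasDerivAt f (f' x) x) (hf' : ∀ x ∈ Icc a b, HasDerivAt f' (f'' x) x)
    (hbound : ∀ x ∈ Icc a b, |f'' x| ≤ K * |f' x| + L * |f x|)
    (hfa : f a = 0) (hfb : f b = 0) (hne : ∃ x ∈ Icc a b, f x ≠ 0) :
    1 ≤ (K + L * (b - a)) * (b - a) := by
  obtain ⟨c, hc, hf'c⟩ := exists_hasDerivAt_eq_zero hab (HasDerivAt.continuousOn hf)
    (hfa.trans hfb.symm) (fun x hx ↦ hf x (Ioo_subset_Icc_self hx))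
  obtain ⟨x₀, hx₀, hmax⟩ := isCompact_Icc.exists_isMaxOn (nonempty_Icc.2 hab.le)
    (HasDerivAt.continuousOn hf').abs
  set M := |f' x₀|
  have hf'_le : ∀ x ∈ Icc a b, |f' x| ≤ M := fun x hx ↦ hmax hx
  have hf_le : ∀ x ∈ Icc a b, |f x| ≤ M * (b - a) := fun x hx ↦
    abs_le_mul_sub_of_hasDerivAt hf hf'_le (left_mem_Icc.2 hab.le) hfa hx
  have hf''_le : ∀ x ∈ Icc a b, |f'' x| ≤ K * M + L * (M * (b - a)) := fun x hx ↦
    (hbound x hx).trans (by gcongr; exacts [hf'_le x hx, hf_le x hx])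
  have hM_le : M ≤ (K * M + L * (M * (b - a))) * (b - a) :=
    abs_le_mul_sub_of_hasDerivAt hf' hf''_le (Ioo_subset_Icc_self hc) hf'c hx₀
  have hM_pos : 0 < M := by
    obtain ⟨x, hx, hfx⟩ := hne
    exact pos_of_mul_pos_left ((abs_pos.2 hfx).trans_le (hf_le x hx)) (sub_nonneg.2 hab.le)
  refine le_of_mul_le_mul_left ?_ hM_pos
  linarith

lemma inv_one_add_le_sub_of_besselJ_eq_zero {ν a b : ℝ} (ha : 0 < a) (hab : a < b)
    (hJa : besselJ ν a = 0) (hJb : besselJ ν b = 0) : (1 + |2 * ν + 1| / a)⁻¹ ≤ b - a := by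
  set K := |2 * ν + 1| / a
  have hK : 0 ≤ K := by positivity
  have hbound : ∀ z ∈ Icc a b, |(2 * ν + 1) / 2 * reducedBesselJ (ν + 1) z - reducedBesselJ ν z| ≤
      K * |-(z / 2) * reducedBesselJ (ν + 1) z| + 1 * |reducedBesselJ ν z| := by
    intro z hz
    have hKz : |2 * ν + 1| ≤ K * z :=
      (div_mul_cancel₀ _ ha.ne').ge.trans (mul_le_mul_of_nonneg_left hz.1 hK)
    refine (abs_sub _ _).trans ?_
    rw [abs_mul, abs_mul, abs_div, abs_neg, abs_div, abs_of_pos (ha.trans_le hz.1), one_mul,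
      ← mul_assoc, ← mul_div_assoc]
    gcongr
  have hone : 1 ≤ (K + 1 * (b - a)) * (b - a) := by
    obtain ⟨z, hz, hne⟩ := exists_mem_Ioo_reducedBesselJ_ne_zero ν ha.le hab
    exact one_le_mul_sub_of_zeros_of_abs_deriv2_le hab hK zero_le_one
      (fun z _ ↦ hasDerivAt_reducedBesselJ ν z) (fun z _ ↦ hasDerivAt_deriv_reducedBesselJ ν z)
      hbound ((besselJ_eq_zero_iff_reducedBesselJ_eq_zero ha).1 hJa)
      ((besselJ_eq_zero_iff_reducedBesselJ_eq_zero (ha.trans hab)).1 hJb)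
      ⟨z, Ioo_subset_Icc_self hz, hne⟩
  by_contra! hlt
  have hlt_one : (b - a) * (1 + K) < 1 := by rwa [← lt_div_iff₀ (by positivity), one_div]
  nlinarith

lemma inv_abs_sq_sub_sq_le {x y u β : ℝ} (hx : 0 ≤ x) (hy : 0 < y) (hu : 0 < u)
    (huxy : u ≤ |x - y|) (hβ : 0 ≤ β) (hβ_le : β ≤ 1 / 2) :
    |x ^ 2 - y ^ 2|⁻¹ ≤ u ^ (-(2 - 2 * β)) * (y ^ 2) ^ (-β) := by
  have hsum : 0 < x + y := by positivity
  have hu_le : u ≤ x + y := huxy.trans (abs_le.2 ⟨by linarith, by linarith⟩)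
  have hinterp : u ^ (1 - 2 * β) * y ^ (2 * β) ≤ x + y :=
    calc u ^ (1 - 2 * β) * y ^ (2 * β) ≤ (x + y) ^ (1 - 2 * β) * (x + y) ^ (2 * β) := by
          gcongr <;> linarith
      _ = x + y := by rw [← rpow_add hsum, sub_add_cancel, rpow_one]
  have hfactor : u ^ (2 - 2 * β) * (y ^ 2) ^ β = u * (u ^ (1 - 2 * β) * y ^ (2 * β)) := by
    rw [← rpow_two, ← rpow_mul hy.le, ← mul_assoc, ← rpow_one_add' hu.le (by linarith)]
    ring_nf
  rw [rpow_neg hu.le, rpow_neg (by positivity), ← mul_inv, hfactor, sq_sub_sq, abs_mul,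
    abs_of_pos hsum, mul_comm (x + y)]
  gcongr

lemma rpow_neg_le_mul_max_one_rpow_neg {m y β : ℝ} (hm : 0 < m) (hmy : m ≤ y) (hβ : 0 ≤ β) :
    y ^ (-β) ≤ min m 1 ^ (-β) * max y 1 ^ (-β) := by
  rw [← mul_rpow (by positivity) (by positivity)]
  refine rpow_le_rpow_of_nonpos (by positivity) ?_ (neg_nonpos.2 hβ)
  rcases le_total y 1 with hy | hy
  · rw [max_eq_right hy, mul_one]
    exact (min_le_left _ _).trans hmy
  · rw [max_eq_left hy]
    exact mul_le_of_le_one_left (by linarith) (min_le_right _ _)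

section Gap

variable {x : ℕ → ℝ} {δ β : ℝ}

lemma mul_le_sub_of_gap (hgap : ∀ k, δ ≤ x (k + 1) - x k) (i n : ℕ) :
    δ * n ≤ x (i + n) - x i := by
  induction n with
  | zero => simp
  | succ n ih =>
    rw [Nat.cast_succ, ← add_assoc]
    linarith [hgap (i + n)]

lemma mul_abs_sub_le_abs_sub_of_gap (hgap : ∀ k, δ ≤ x (k + 1) - x k) (i k : ℕ) :
    δ * |(k : ℝ) - i| ≤ |x k - x i| := by
  wlog hik : i ≤ k generalizing i k
  · rw [abs_sub_comm, abs_sub_comm (x k)]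
    exact this k i (le_of_not_ge hik)
  obtain ⟨n, rfl⟩ := Nat.exists_eq_add_of_le hik
  rw [Nat.cast_add, add_sub_cancel_left, Nat.abs_cast]
  exact (mul_le_sub_of_gap hgap i n).trans (le_abs_self _)

lemma summable_rpow_neg_of_gap (hδ : 0 < δ) (hgap : ∀ k, δ ≤ x (k + 1) - x k) (hx₀ : 0 ≤ x 0)
    {s : ℝ} (hs : 1 < s) : Summable fun k ↦ x k ^ (-s) := by
  have hlower (k : ℕ) : δ * k ≤ x k := by
    simpa using (mul_le_sub_of_gap hgap 0 k).trans (sub_le_self _ hx₀)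
  have hx (k : ℕ) : 0 ≤ x k := le_trans (by positivity) (hlower k)
  rw [← summable_nat_add_iff 1]
  have hmajorant : Summable fun n : ℕ ↦ δ ^ (-s) * ((n + 1 : ℕ) : ℝ) ^ (-s) :=
    ((summable_nat_add_iff 1).2 (Real.summable_nat_rpow.2 (neg_lt_neg hs))).mul_left _
  refine hmajorant.of_nonneg_of_le (fun n ↦ rpow_nonneg (hx _) _) fun n ↦ ?_
  rw [← mul_rpow hδ.le (by positivity)]
  exact rpow_le_rpow_of_nonpos (by positivity) (hlower _) (by linarith)

lemma inv_abs_sq_sub_sq_le_of_gap (hδ : 0 < δ) (hgap : ∀ k, δ ≤ x (k + 1) - x k)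
    (hx : ∀ k, 0 < x k) (hβ : 0 ≤ β) (hβ_le : β ≤ 1 / 2) {i k : ℕ} (hik : k ≠ i) :
    |x k ^ 2 - x i ^ 2|⁻¹ ≤
      δ ^ (-(2 - 2 * β)) * (x i ^ 2) ^ (-β) * |((k - i : ℤ) : ℝ)| ^ (-(2 - 2 * β)) := by
  have hdist : 0 < |(k : ℝ) - i| := abs_pos.2 (sub_ne_zero.2 (Nat.cast_injective.ne hik))
  refine (inv_abs_sq_sub_sq_le (hx k).le (hx i) (mul_pos hδ hdist)
    (mul_abs_sub_le_abs_sub_of_gap hgap i k) hβ hβ_le).trans_eq ?_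
  rw [mul_rpow hδ.le hdist.le, Int.cast_sub, Int.cast_natCast, Int.cast_natCast]
  ring

lemma summable_inv_abs_sq_sub_sq_and_tsum_le_of_gap (hδ : 0 < δ)
    (hgap : ∀ k, δ ≤ x (k + 1) - x k) (hx : ∀ k, 0 < x k) (hβ : 0 ≤ β) (hβ_lt : β < 1 / 2) (i : ℕ) :
    (Summable fun k : {k : ℕ // k ≠ i} ↦ |x k ^ 2 - x i ^ 2|⁻¹) ∧
      ∑' k : {k : ℕ // k ≠ i}, |x k ^ 2 - x i ^ 2|⁻¹ ≤
        δ ^ (-(2 - 2 * β)) * (x i ^ 2) ^ (-β) * ∑' n : ℤ, |(n : ℝ)| ^ (-(2 - 2 * β)) := by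
  have hsum : Summable fun n : ℤ ↦ |(n : ℝ)| ^ (-(2 - 2 * β)) :=
    summable_abs_int_rpow (by linarith)
  have hinj : Function.Injective fun k : {k : ℕ // k ≠ i} ↦ (k - i : ℤ) := fun k l hkl ↦
    Subtype.ext (Nat.cast_injective (sub_left_injective hkl))
  have hle (k : {k : ℕ // k ≠ i}) := inv_abs_sq_sub_sq_le_of_gap hδ hgap hx hβ hβ_lt.le k.2
  have hmajorant := (hsum.comp_injective hinj).mul_left (δ ^ (-(2 - 2 * β)) * (x i ^ 2) ^ (-β))
  have hsummable := hmajorant.of_nonneg_of_le (fun _ ↦ by positivity) hle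
  refine ⟨hsummable, (hsummable.tsum_le_tsum hle hmajorant).trans ?_⟩
  rw [tsum_mul_left]
  gcongr
  exact tsum_comp_le_tsum_of_inj hsum (fun _ ↦ by positivity) hinj

lemma exists_tsum_inv_abs_sq_sub_sq_le_of_gap (hδ : 0 < δ) (hgap : ∀ k, δ ≤ x (k + 1) - x k)
    (hx₀ : 0 < x 0) (hβ : 0 ≤ β) (hβ_lt : β < 1 / 2) :
    ∃ C : ℝ, 0 < C ∧ ∀ i : ℕ,
      (Summable fun k : {k : ℕ // k ≠ i} ↦ |x k ^ 2 - x i ^ 2|⁻¹) ∧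
      ∑' k : {k : ℕ // k ≠ i}, |x k ^ 2 - x i ^ 2|⁻¹ ≤ C * max (x i ^ 2) 1 ^ (-β) := by
  have hmono : Monotone x := monotone_nat_of_le_succ fun k ↦ by linarith [hgap k]
  have hx (k : ℕ) : 0 < x k := hx₀.trans_le (hmono k.zero_le)
  set S := ∑' n : ℤ, |(n : ℝ)| ^ (-(2 - 2 * β))
  have hS : 0 < S := (summable_abs_int_rpow (by linarith)).tsum_pos (fun _ ↦ by positivity) 1
    (by simp)
  refine ⟨δ ^ (-(2 - 2 * β)) * min (x 0 ^ 2) 1 ^ (-β) * S, by positivity, fun i ↦ ?_⟩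
  obtain ⟨hsummable, hle⟩ :=
    summable_inv_abs_sq_sub_sq_and_tsum_le_of_gap hδ hgap hx hβ hβ_lt i
  refine ⟨hsummable, hle.trans ?_⟩
  have hxi : x 0 ^ 2 ≤ x i ^ 2 := by gcongr; exact hmono i.zero_le
  calc δ ^ (-(2 - 2 * β)) * (x i ^ 2) ^ (-β) * S
      ≤ δ ^ (-(2 - 2 * β)) * (min (x 0 ^ 2) 1 ^ (-β) * max (x i ^ 2) 1 ^ (-β)) * S := by
        gcongr
        exact rpow_neg_le_mul_max_one_rpow_neg (by positivity) hxi hβ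
    _ = δ ^ (-(2 - 2 * β)) * min (x 0 ^ 2) 1 ^ (-β) * S * max (x i ^ 2) 1 ^ (-β) := by ring

end Gap

lemma exists_gap_of_besselJ_eq_zero {ν : ℝ} {j : ℕ → ℝ} (hjpos : ∀ k, 0 < j k)
    (hjzero : ∀ k, besselJ ν (j k) = 0) (hjmono : StrictMono j) :
    ∃ δ : ℝ, 0 < δ ∧ ∀ k, δ ≤ j (k + 1) - j k := by
  have hj₀ := hjpos 0
  refine ⟨(1 + |2 * ν + 1| / j 0)⁻¹, by positivity, fun k ↦ ?_⟩
  have hjk := hjpos k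
  calc (1 + |2 * ν + 1| / j 0)⁻¹ ≤ (1 + |2 * ν + 1| / j k)⁻¹ := by
        gcongr
        exact hjmono.monotone k.zero_le
    _ ≤ j (k + 1) - j k := inv_one_add_le_sub_of_besselJ_eq_zero hjk (hjmono k.lt_succ_self)
        (hjzero k) (hjzero (k + 1))

theorem squared_bessel_zeros_satisfy_CA_general (ν : ℝ) (j : ℕ → ℝ) (hjpos : ∀ k, 0 < j k)
    (hjzero : ∀ k, besselJ ν (j k) = 0) (hjmono : StrictMono j) :
    (∀ α : ℝ, 1 / 2 < α → Summable fun k ↦ j k ^ (-(2 * α))) ∧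
      ∀ β : ℝ, 0 ≤ β → β < 1 / 2 → ∃ C₂ : ℝ, 0 < C₂ ∧ ∀ i : ℕ,
        (Summable fun k : {k : ℕ // k ≠ i} ↦ |j k ^ 2 - j i ^ 2|⁻¹) ∧
        ∑' k : {k : ℕ // k ≠ i}, |j k ^ 2 - j i ^ 2|⁻¹ ≤ C₂ * max (j i ^ 2) 1 ^ (-β) := by
  obtain ⟨δ, hδ, hgap⟩ := exists_gap_of_besselJ_eq_zero hjpos hjzero hjmono
  exact ⟨fun α hα ↦ summable_rpow_neg_of_gap hδ hgap (hjpos 0).le (by linarith),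
    fun β hβ hβ_lt ↦ exists_tsum_inv_abs_sq_sub_sq_le_of_gap hδ hgap (hjpos 0) hβ hβ_lt⟩

/-- The configuration of squared positive zeros of `J_ν` satisfies conditions (C.A). -/
theorem squared_bessel_zeros_satisfy_CA
    (ν : ℝ) (hν : -1 < ν) (j : ℕ → ℝ)
    (hjpos : ∀ k, 0 < j k) (hjzero : ∀ k, besselJ ν (j k) = 0)
    (hjmono : StrictMono j)
    (hjall : ∀ z : ℝ, 0 < z → besselJ ν z = 0 → ∃ k, z = j k) :
    (∀ α : ℝ, 1 / 2 < α → α < 1 → Summable fun k : ℕ => (j k) ^ (-(2 * α))) ∧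
      ∃ β : ℝ, 0 < β ∧ ∃ C₂ : ℝ, 0 < C₂ ∧
        ∀ i : ℕ,
          (Summable fun k : {k : ℕ // k ≠ i} => |(j k.1) ^ 2 - (j i) ^ 2|⁻¹) ∧
          (∑' k : {k : ℕ // k ≠ i}, |(j k.1) ^ 2 - (j i) ^ 2|⁻¹) ≤
            C₂ * (max ((j i) ^ 2) 1) ^ (-β) := by
  obtain ⟨hsum, hbound⟩ := squared_bessel_zeros_satisfy_CA_general ν j hjpos hjzero hjmono
  exact ⟨fun α hα _ ↦ hsum α hα, 1 / 4, by norm_num, hbound _ (by norm_num) (by norm_num)⟩
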